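/- For every coset λ_P ∈ Q^∨/Q_P^∨ there exists a unique λ_B ∈ Q^∨ such that λ_P = λ_B + Q_P^∨ and ⟨α, λ_B⟩ ∈ {0, −1} for all α ∈ R_P^+ (Peterson–Woodward lifting). -/

import Mathlib

/-!
Let `(u, v) = ∑_{β ∈ R} ⟨β, u⟩ ⟨β, v⟩` be the canonical form on the coroot lattice, so that
`2 (v, γ^∨) = ⟨γ, v⟩ (γ^∨, γ^∨)`.

*Existence.* In the coset, minimise `F v = (v, v) + ⟨2ρ, v⟩`; it is nonnegative because
`t² + t ≥ 0` for integers `t`. For a positive root `γ` of `R_P`, minimality of `F μ` gives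
`(1 ± ⟨γ, μ⟩) (γ^∨, γ^∨) ± ⟨2ρ, γ^∨⟩ ≥ 0`, and `0 < ⟨2ρ, γ^∨⟩ < (γ^∨, γ^∨)`, so
`-2 < ⟨γ, μ⟩ < 1`.

*Uniqueness.* The difference `v ∈ Q_P^∨` of two solutions satisfies `|⟨γ, v⟩| ≤ 1` on `R_P`. Since
the Cartan matrix is an M-matrix (`2ρ` pairs to `2` with every simple coroot), `v ≠ 0` would give
an `i` with `v_i ⟨α_i, v⟩ > 0`. Then `s_i v` has the same property and a smaller `∑ |v_j|`, so
by induction `s_i v = 0`, hence `v = 0`.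
-/

open scoped BigOperators

/-- A reduced crystallographic root system with a fixed base `α_1, …, α_n` of simple
roots, bundled with its Weyl group `W`.  A root `γ` is recorded by its integer
coordinate vector in the basis of simple roots (so the `i`-th simple root is
`Pi.single i 1`), and `cor γ` is the coordinate vector of the coroot `γ^∨` in the
basis of simple coroots (hence `cor γ i = ⟨χ_i, γ^∨⟩` for the fundamental weights
`χ_i`).  `A i j = ⟨α_i, α_j^∨⟩` is the Cartan matrix, `σ γ` is the reflection `s_γ`
and `act` is the action of the Weyl group on the root lattice. -/
structure RootSystemData (n : ℕ) where
  A : Fin n → Fin n → ℤ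
  R : Finset (Fin n → ℤ)
  cor : (Fin n → ℤ) → (Fin n → ℤ)
  W : Type
  [grp : Group W]
  σ : (Fin n → ℤ) → W
  act : W → (Fin n → ℤ) → (Fin n → ℤ)
  simple_mem : ∀ i : Fin n, (Pi.single i 1 : Fin n → ℤ) ∈ R
  root_ne_zero : ∀ γ ∈ R, γ ≠ 0
  neg_mem : ∀ γ ∈ R, -γ ∈ R
  pos_or_neg : ∀ γ ∈ R, (∀ i, 0 ≤ γ i) ∨ (∀ i, γ i ≤ 0)
  reduced : ∀ γ ∈ R, ∀ k : ℤ, k • γ ∈ R → k = 1 ∨ k = -1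
  cor_simple : ∀ i : Fin n, cor (Pi.single i 1) = Pi.single i 1
  cor_neg : ∀ γ ∈ R, cor (-γ) = -(cor γ)
  pair_self : ∀ γ ∈ R, (∑ i, ∑ j, γ i * A i j * cor γ j) = 2
  act_one : ∀ x, act 1 x = x
  act_mul : ∀ w w' x, act (w * w') x = act w (act w' x)
  act_refl : ∀ γ ∈ R, ∀ x, act (σ γ) x = x - (∑ i, ∑ j, x i * A i j * cor γ j) • γ
  act_mem : ∀ (w : W), ∀ γ ∈ R, act w γ ∈ R
  cor_refl : ∀ γ ∈ R, ∀ β ∈ R,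
    cor (act (σ γ) β) = cor β - (∑ i, ∑ j, γ i * A i j * cor β j) • cor γ
  refl_sq : ∀ γ ∈ R, σ γ * σ γ = 1
  refl_act : ∀ (w : W), ∀ γ ∈ R, σ (act w γ) = w * σ γ * w⁻¹
  act_faithful : ∀ w w' : W, (∀ γ ∈ R, act w γ = act w' γ) → w = w'
  generated : ∀ w : W, ∃ l : List (Fin n), w = (l.map fun i => σ (Pi.single i 1)).prod

namespace RootSystemData

instance {n : ℕ} (c : RootSystemData n) : Group c.W := c.grp

/-- the pairing `⟨x, λ⟩` between an element `x` of the root lattice (coordinates in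
the basis of simple roots) and an element `λ` of the coroot lattice (coordinates in
the basis of simple coroots) -/
def pair {n : ℕ} (c : RootSystemData n) (x lam : Fin n → ℤ) : ℤ :=
  ∑ i, ∑ j, x i * c.A i j * lam j

/-- the `i`-th simple root -/
def sroot {n : ℕ} (_c : RootSystemData n) (i : Fin n) : Fin n → ℤ := Pi.single i 1

/-- the simple reflection `s_i` -/
def s {n : ℕ} (c : RootSystemData n) (i : Fin n) : c.W := c.σ (c.sroot i)

/-- `s_{α_{t+1}}` for a `0`-based natural number index `t` (`= 1` when out of range) -/
def sN {n : ℕ} (c : RootSystemData n) (t : ℕ) : c.W := if h : t < n then c.s ⟨t, h⟩ else 1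

/-- `⟨2ρ, λ⟩ = Σ_{β ∈ R^+} ⟨β, λ⟩`, where `ρ` is the half-sum of the positive roots -/
def pairTwoRho {n : ℕ} (c : RootSystemData n) (lam : Fin n → ℤ) : ℤ :=
  ∑ β ∈ c.R, if ∀ i, 0 ≤ β i then c.pair β lam else 0

/-- the length of `w ∈ W` with respect to the simple reflections -/
noncomputable def len {n : ℕ} (c : RootSystemData n) (w : c.W) : ℕ :=
  sInf {k | ∃ l : List (Fin n), l.length = k ∧ (l.map c.s).prod = w}

/-- the parabolic subgroup `W_S` generated by the simple reflections indexed by `S` -/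
def Wsub {n : ℕ} (c : RootSystemData n) (S : Finset (Fin n)) : Subgroup c.W :=
  Subgroup.closure (c.s '' ↑S)

/-- `w ∈ W_T^S`: `w ∈ W_T` and `w` has minimal length in the coset `w W_S` -/
def MinRep {n : ℕ} (c : RootSystemData n) (T S : Finset (Fin n)) (w : c.W) : Prop :=
  w ∈ c.Wsub T ∧ ∀ u ∈ c.Wsub S, c.len w ≤ c.len (w * u)

/-- `w` is the longest element of `W_S` -/
def IsLongest {n : ℕ} (c : RootSystemData n) (S : Finset (Fin n)) (w : c.W) : Prop :=
  w ∈ c.Wsub S ∧ ∀ v ∈ c.Wsub S, c.len v ≤ c.len w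

end RootSystemData

/-- the support of `γ` is contained in `S`, i.e. `γ` lies in the span of
`{α_i : i ∈ S}` (for a root `γ`, membership in `R_S`) -/
def suppIn {n : ℕ} (S : Finset (Fin n)) (γ : Fin n → ℤ) : Prop :=
  ∀ i, i ∉ S → γ i = 0

/-- `Δ_j` for `0 ≤ j ≤ r+1`: the index set of the first `j` simple roots for `j ≤ r`,
and all of `Δ` for `j = r+1`.  (Indices of simple roots are `0`-based, so
`α_1, …, α_j` correspond to the indices `0, …, j-1`.) -/
def deltaSet (n r j : ℕ) : Finset (Fin n) :=
  if j = r + 1 then Finset.univ else Finset.univ.filter fun i => (i : ℕ) < j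

namespace RootSystemData

/-- `v 0, …, v r` (standing for `v_1, …, v_{r+1}`) is the decomposition of `w`
associated to `(Δ_P, Υ)`:  each `v_i ∈ W_{Δ_i}^{Δ_{i-1}}` and `w = v_{r+1} v_r ⋯ v_1`. -/
def IsDecomp {n : ℕ} (c : RootSystemData n) (r : ℕ) (w : c.W)
    (v : Fin (r + 1) → c.W) : Prop :=
  (∀ k : Fin (r + 1), c.MinRep (deltaSet n r ((k : ℕ) + 1)) (deltaSet n r (k : ℕ)) (v k)) ∧
    w = (List.ofFn v).reverse.prod

/-- the first `m` simple roots `α_1, …, α_m` form a path of type `A_m`: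
`⟨α_i, α_j^∨⟩ = -1` if `|i-j| = 1` and `⟨α_i, α_j^∨⟩ = 0` if `|i-j| ≥ 2`. -/
def PathA {n : ℕ} (c : RootSystemData n) (m : ℕ) : Prop :=
  ∀ i j : Fin n, (i : ℕ) < m → (j : ℕ) < m →
    (((i : ℕ) + 1 = (j : ℕ) ∨ (j : ℕ) + 1 = (i : ℕ)) → c.A i j = -1) ∧
    ((i : ℕ) + 2 ≤ (j : ℕ) ∨ (j : ℕ) + 2 ≤ (i : ℕ) → c.A i j = 0)

/-- `u_{[k,m]} = s_k s_{k+1} ⋯ s_m` (`1`-based indices; `u_{[k,m]} = 1` for `k > m`) -/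
def uu {n : ℕ} (c : RootSystemData n) (k m : ℕ) : c.W :=
  ((List.range' k (m + 1 - k)).map fun t => c.sN (t - 1)).prod

/-- `u_i^{(m)} = s_{m-i+1} s_{m-i+2} ⋯ s_m` -/
def uElt {n : ℕ} (c : RootSystemData n) (i m : ℕ) : c.W := c.uu (m - i + 1) m

end RootSystemData

/-- strict lexicographic order on `Fin m → ℤ` -/
def lexLT {m : ℕ} (x y : Fin m → ℤ) : Prop :=
  ∃ j, x j < y j ∧ ∀ k, k < j → x k = y k

/-- lexicographic order on `Fin m → ℤ` -/
def lexLE {m : ℕ} (x y : Fin m → ℤ) : Prop := x = y ∨ lexLT x y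

/-- the grading `gr(q_{α_{j+1}^∨}) ∈ ℤ^{r+1}` (for the `0`-based index `j < r`), when
`Δ_P` is of type `A_r`: in `1`-based terms, `gr(q_{α_1^∨}) = 2·e_1` and
`gr(q_{α_j^∨}) = (1-j)·e_{j-1} + (1+j)·e_j` for `2 ≤ j ≤ r`. -/
def grQ (r j : ℕ) : Fin (r + 1) → ℤ := fun k =>
  (if (k : ℕ) = j then (j : ℤ) + 2 else 0) + (if (k : ℕ) + 1 = j then -(j : ℤ) else 0)

/-- the grading `gr(q_λ)` for `λ ∈ Q_P^∨` (coordinates in simple coroots), extended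
additively from the `gr(q_{α_j^∨})`, when `Δ_P` is of type `A_r` -/
def grQlam (n r : ℕ) (lam : Fin n → ℤ) : Fin (r + 1) → ℤ :=
  fun k => ∑ j, lam j * grQ r (j : ℕ) k

/-- Nonsingular M-matrices do not reverse the sign of any nonzero vector, i.e. they are
P-matrices. The proof compares `A v` with `A |v|`. -/
lemma eq_zero_of_forall_mul_mulVec_nonpos {ι R : Type*} [Fintype ι] [CommRing R] [LinearOrder R]
    [IsStrictOrderedRing R] {A : Matrix ι ι R} (hA : ∀ i j, i ≠ j → A i j ≤ 0) {x : ι → R}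
    (hx : ∀ i, 0 ≤ x i) (hxA : ∀ j, 0 < (Matrix.vecMul x A) j) {v : ι → R}
    (hv : ∀ i, v i * (A.mulVec v) i ≤ 0) : v = 0 := by
  have hle (i j) : A i j * (|v i| * |v j|) ≤ A i j * (v i * v j) := by
    rcases eq_or_ne i j with rfl | hij
    · rw [abs_mul_abs_self]
    · exact mul_le_mul_of_nonpos_left (abs_mul (v i) (v j) ▸ le_abs_self _) (hA i j hij)
  have habs (i) : (A.mulVec |v|) i ≤ 0 := by
    rcases eq_or_ne (v i) 0 with hi | hi
    · refine Finset.sum_nonpos fun j _ => ?_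
      rcases eq_or_ne i j with rfl | hij
      · simp [hi]
      · exact mul_nonpos_of_nonpos_of_nonneg (hA i j hij) (abs_nonneg _)
    · refine nonpos_of_mul_nonpos_right (le_trans ?_ (hv i)) (abs_pos.mpr hi)
      simp only [Matrix.mulVec, dotProduct, Finset.mul_sum]
      exact Finset.sum_le_sum fun j _ => by
        simpa only [Pi.abs_apply, mul_left_comm] using hle i j
  have hsum : Matrix.vecMul x A ⬝ᵥ |v| ≤ 0 := by
    rw [← Matrix.dotProduct_mulVec]
    exact Finset.sum_nonpos fun i _ => mul_nonpos_of_nonneg_of_nonpos (hx i) (habs i)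
  have hterm (j) : 0 ≤ Matrix.vecMul x A j * |v| j := mul_nonneg (hxA j).le (abs_nonneg _)
  have hzero := (Finset.sum_eq_zero_iff_of_nonneg fun j _ => hterm j).mp
    (hsum.antisymm (Finset.sum_nonneg fun j _ => hterm j))
  funext j
  exact abs_eq_zero.mp ((mul_eq_zero.mp (hzero j (Finset.mem_univ j))).resolve_left (hxA j).ne')

lemma suppIn_single {n : ℕ} {P : Finset (Fin n)} {i : Fin n} (hi : i ∈ P) :
    suppIn P (Pi.single i 1) := fun _ hj => Pi.single_eq_of_ne (ne_of_mem_of_not_mem hi hj).symm 1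

lemma sum_natAbs_sub_single_lt {ι : Type*} [Fintype ι] [DecidableEq ι] {v : ι → ℤ} {i : ι} {p : ℤ}
    (hp : |p| ≤ 1) (hvp : 0 < v i * p) :
    ∑ j, ((v - p • (Pi.single i 1 : ι → ℤ)) j).natAbs < ∑ j, (v j).natAbs := by
  have hi : (v i - p).natAbs < (v i).natAbs := by
    rcases pos_and_pos_or_neg_and_neg_of_mul_pos hvp with h | h <;> rw [abs_le] at hp <;> omega
  refine Finset.sum_lt_sum (fun j _ => ?_) ⟨i, Finset.mem_univ i, by simpa using hi⟩
  rcases eq_or_ne j i with rfl | hj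
  · simpa using hi.le
  · simp [hj]

namespace RootSystemData

variable {n : ℕ} (c : RootSystemData n)

/-- The Cartan matrix, in the convention `(i, j) ↦ ⟨α_i, α_j^∨⟩`. -/
def cartanMatrix : Matrix (Fin n) (Fin n) ℤ := Matrix.of c.A

/-- The pairing `⟨x, v⟩` as a bilinear map. -/
def pairForm : LinearMap.BilinForm ℤ (Fin n → ℤ) := Matrix.toBilin' c.cartanMatrix

lemma pairForm_apply (x v : Fin n → ℤ) : c.pairForm x v = c.pair x v :=
  Matrix.toBilin'_apply _ _ _

lemma pair_sub_left (x y v : Fin n → ℤ) : c.pair (x - y) v = c.pair x v - c.pair y v := by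
  simp only [← pairForm_apply, map_sub, LinearMap.sub_apply]

lemma pair_neg_left (x v : Fin n → ℤ) : c.pair (-x) v = -c.pair x v := by
  simp only [← pairForm_apply, map_neg, LinearMap.neg_apply]

lemma pair_smul_left (k : ℤ) (x v : Fin n → ℤ) : c.pair (k • x) v = k * c.pair x v := by
  simp only [← pairForm_apply, map_smul, LinearMap.smul_apply, smul_eq_mul]

lemma pair_sum_left {ι : Type*} (s : Finset ι) (f : ι → Fin n → ℤ) (v : Fin n → ℤ) :
    c.pair (∑ i ∈ s, f i) v = ∑ i ∈ s, c.pair (f i) v := by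
  simp only [← pairForm_apply, map_sum, LinearMap.sum_apply]

lemma pair_neg_right (x v : Fin n → ℤ) : c.pair x (-v) = -c.pair x v := by
  simp only [← pairForm_apply, map_neg]

lemma pair_sub_right (x u v : Fin n → ℤ) : c.pair x (u - v) = c.pair x u - c.pair x v := by
  simp only [← pairForm_apply, map_sub]

lemma pair_smul_right (k : ℤ) (x v : Fin n → ℤ) : c.pair x (k • v) = k * c.pair x v := by
  simp only [← pairForm_apply, map_smul, smul_eq_mul]

lemma pair_eq_sum_left (x v : Fin n → ℤ) :
    c.pair x v = ∑ i, x i * c.pair (Pi.single i 1) v := by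
  simp [pair, Pi.single_apply, Finset.mul_sum, mul_assoc]

lemma pair_eq_dotProduct (x v : Fin n → ℤ) :
    c.pair x v = x ⬝ᵥ Matrix.mulVec c.cartanMatrix v := by
  simp [pair, cartanMatrix, dotProduct, Matrix.mulVec, Finset.mul_sum, mul_assoc]

lemma pair_single_single (i j : Fin n) :
    c.pair (Pi.single i 1) (Pi.single j 1) = c.cartanMatrix i j := by
  simp [pair_eq_dotProduct]

/-! ### Reflections -/

lemma pair_cor_self {γ : Fin n → ℤ} (hγ : γ ∈ c.R) : c.pair γ (c.cor γ) = 2 :=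
  c.pair_self γ hγ

lemma pair_single_self (i : Fin n) : c.pair (Pi.single i 1) (Pi.single i 1) = 2 := by
  simpa only [c.cor_simple] using c.pair_cor_self (c.simple_mem i)

lemma act_σ {γ : Fin n → ℤ} (hγ : γ ∈ c.R) (x : Fin n → ℤ) :
    c.act (c.σ γ) x = x - c.pair x (c.cor γ) • γ :=
  c.act_refl γ hγ x

lemma act_s (i : Fin n) (x : Fin n → ℤ) :
    c.act (c.s i) x = x - c.pair x (Pi.single i 1) • Pi.single i 1 := by
  rw [s, sroot, c.act_σ (c.simple_mem i), c.cor_simple]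

lemma act_s_apply_of_ne {j k : Fin n} (hkj : k ≠ j) (x : Fin n → ℤ) :
    c.act (c.s j) x k = x k := by
  simp [act_s, hkj]

lemma act_s_act_s (i : Fin n) (x : Fin n → ℤ) : c.act (c.s i) (c.act (c.s i) x) = x := by
  rw [← c.act_mul, s, sroot, c.refl_sq _ (c.simple_mem i), c.act_one]

lemma sum_act {M : Type*} [AddCommMonoid M] (w : c.W) (f : (Fin n → ℤ) → M) :
    ∑ β ∈ c.R, f (c.act w β) = ∑ β ∈ c.R, f β :=
  Finset.sum_nbij' (c.act w) (c.act w⁻¹) (c.act_mem w) (c.act_mem w⁻¹)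
    (fun β _ => by rw [← c.act_mul, inv_mul_cancel, c.act_one])
    (fun β _ => by rw [← c.act_mul, mul_inv_cancel, c.act_one]) fun _ _ => rfl

/-- The reflection `v ↦ v - ⟨γ, v⟩ γ^∨` of the coroot lattice, transposed to `s_γ`. -/
def coreflection (γ v : Fin n → ℤ) : Fin n → ℤ := v - c.pair γ v • c.cor γ

lemma pair_act_σ {γ : Fin n → ℤ} (hγ : γ ∈ c.R) (x v : Fin n → ℤ) :
    c.pair (c.act (c.σ γ) x) v = c.pair x (c.coreflection γ v) := by
  rw [c.act_σ hγ, coreflection, pair_sub_left, pair_smul_left, pair_sub_right, pair_smul_right,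
    mul_comm]

lemma coreflection_cor {γ : Fin n → ℤ} (hγ : γ ∈ c.R) :
    c.coreflection γ (c.cor γ) = -c.cor γ := by
  rw [coreflection, c.pair_cor_self hγ]
  module

lemma coreflection_single (i : Fin n) (v : Fin n → ℤ) :
    c.coreflection (Pi.single i 1) v = v - c.pair (Pi.single i 1) v • Pi.single i 1 := by
  rw [coreflection, c.cor_simple]

/-! ### Positive roots and `2ρ` -/

/-- The set `R^+` of positive roots. -/
def posRoots : Finset (Fin n → ℤ) := {β ∈ c.R | ∀ i, 0 ≤ β i}

/-- The sum `2ρ` of the positive roots. -/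
def twoRho : Fin n → ℤ := ∑ β ∈ c.posRoots, β

lemma mem_posRoots {γ : Fin n → ℤ} : γ ∈ c.posRoots ↔ γ ∈ c.R ∧ ∀ i, 0 ≤ γ i :=
  Finset.mem_filter

lemma single_mem_posRoots (i : Fin n) : Pi.single i 1 ∈ c.posRoots :=
  c.mem_posRoots.mpr ⟨c.simple_mem i, fun j => by rw [Pi.single_apply]; split_ifs <;> decide⟩

lemma act_s_mem_posRoots {γ : Fin n → ℤ} (hγ : γ ∈ c.R) {j k : Fin n} (hkj : k ≠ j)
    (hk : 0 < γ k) : c.act (c.s j) γ ∈ c.posRoots := by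
  have hmem := c.act_mem (c.s j) γ hγ
  exact c.mem_posRoots.mpr ⟨hmem, (c.pos_or_neg _ hmem).resolve_right fun h =>
    (c.act_s_apply_of_ne hkj γ ▸ hk).not_ge (h k)⟩

lemma cartanMatrix_nonpos {i j : Fin n} (hij : i ≠ j) : c.cartanMatrix i j ≤ 0 := by
  have h := (c.mem_posRoots.mp (c.act_s_mem_posRoots (c.simple_mem i) hij (by simp))).2 j
  rw [c.act_s, pair_single_single] at h
  simpa [hij] using h

lemma exists_ne_pos_of_mem_posRoots {γ : Fin n → ℤ} (hγ : γ ∈ c.posRoots) {j : Fin n}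
    (hne : γ ≠ Pi.single j 1) : ∃ k, k ≠ j ∧ 0 < γ k := by
  obtain ⟨hR, hnonneg⟩ := c.mem_posRoots.mp hγ
  by_contra! h
  have hγj : γ = γ j • Pi.single j 1 := by
    funext k
    rcases eq_or_ne k j with rfl | hk
    · simp
    · simpa [hk] using (h k hk).antisymm (hnonneg k)
  rcases c.reduced _ (c.simple_mem j) (γ j) (hγj ▸ hR) with h1 | h1
  · exact hne (by rw [hγj, h1, one_smul])
  · linarith [hnonneg j]

lemma act_s_mem_posRoots_erase {γ : Fin n → ℤ} {j : Fin n}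
    (hγ : γ ∈ c.posRoots.erase (Pi.single j 1)) :
    c.act (c.s j) γ ∈ c.posRoots.erase (Pi.single j 1) := by
  obtain ⟨hne, hpos⟩ := Finset.mem_erase.mp hγ
  obtain ⟨k, hkj, hk⟩ := c.exists_ne_pos_of_mem_posRoots hpos hne
  refine Finset.mem_erase.mpr
    ⟨fun h => ?_, c.act_s_mem_posRoots (c.mem_posRoots.mp hpos).1 hkj hk⟩
  rw [← c.act_s_apply_of_ne hkj γ, h, Pi.single_eq_of_ne hkj] at hk
  exact hk.false

lemma pair_twoRho (v : Fin n → ℤ) : c.pair c.twoRho v = c.pairTwoRho v := by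
  rw [twoRho, pair_sum_left, posRoots, Finset.sum_filter, pairTwoRho]

lemma pairTwoRho_neg (v : Fin n → ℤ) : c.pairTwoRho (-v) = -c.pairTwoRho v := by
  simp only [← pair_twoRho, pair_neg_right]

lemma pair_twoRho_single (j : Fin n) : c.pair c.twoRho (Pi.single j 1) = 2 := by
  have hneg (β : Fin n → ℤ) :
      c.pair (c.act (c.s j) β) (Pi.single j 1) = -c.pair β (Pi.single j 1) := by
    rw [c.act_s, pair_sub_left, pair_smul_left, pair_single_self]
    ring
  have herase : ∑ β ∈ c.posRoots.erase (Pi.single j 1), c.pair β (Pi.single j 1) = 0 := by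
    refine Finset.sum_involution (fun β _ => c.act (c.s j) β) (fun β _ => ?_) (fun β _ hβ h => ?_)
      (fun β hβ => c.act_s_mem_posRoots_erase hβ) fun β _ => c.act_s_act_s j β
    · rw [hneg, add_neg_cancel]
    · have := hneg β
      rw [h] at this
      omega
  rw [twoRho, pair_sum_left, ← Finset.add_sum_erase _ _ (c.single_mem_posRoots j), herase, add_zero,
    pair_single_self]

lemma vecMul_twoRho_cartanMatrix (j : Fin n) : Matrix.vecMul c.twoRho c.cartanMatrix j = 2 := by
  rw [← c.pair_twoRho_single j, pair_eq_dotProduct, Matrix.dotProduct_mulVec, dotProduct_single,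
    mul_one]

lemma pairTwoRho_eq_two_mul_sum (v : Fin n → ℤ) : c.pairTwoRho v = 2 * ∑ j, v j := by
  rw [← pair_twoRho, pair_eq_dotProduct, Matrix.dotProduct_mulVec]
  simp only [dotProduct, vecMul_twoRho_cartanMatrix, Finset.mul_sum]

lemma twoRho_nonneg (i : Fin n) : 0 ≤ c.twoRho i := by
  rw [twoRho, Finset.sum_apply]
  exact Finset.sum_nonneg fun β hβ => (c.mem_posRoots.mp hβ).2 i

lemma eq_zero_of_forall_mul_pair_single_nonpos {v : Fin n → ℤ}
    (hv : ∀ i, v i * c.pair (Pi.single i 1) v ≤ 0) : v = 0 :=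
  eq_zero_of_forall_mul_mulVec_nonpos (fun _ _ => c.cartanMatrix_nonpos) c.twoRho_nonneg
    (fun j => by rw [vecMul_twoRho_cartanMatrix]; exact two_pos)
    fun i => by simpa [pair_eq_dotProduct] using hv i

/-! ### The canonical form on the coroot lattice -/

/-- The canonical Weyl-invariant form `(u, v) = ∑_{β ∈ R} ⟨β, u⟩ ⟨β, v⟩` on the coroot lattice. -/
def corootForm : LinearMap.BilinForm ℤ (Fin n → ℤ) :=
  ∑ β ∈ c.R, LinearMap.BilinForm.linMulLin (c.pairForm β) (c.pairForm β)

lemma corootForm_apply (u v : Fin n → ℤ) :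
    c.corootForm u v = ∑ β ∈ c.R, c.pair β u * c.pair β v := by
  simp [corootForm, LinearMap.sum_apply, pairForm_apply]

lemma corootForm_comm (u v : Fin n → ℤ) : c.corootForm u v = c.corootForm v u := by
  simp only [corootForm_apply, mul_comm]

lemma corootForm_coreflection {γ : Fin n → ℤ} (hγ : γ ∈ c.R) (u v : Fin n → ℤ) :
    c.corootForm (c.coreflection γ u) (c.coreflection γ v) = c.corootForm u v := by
  simp only [corootForm_apply, ← c.pair_act_σ hγ]
  exact c.sum_act _ fun β => c.pair β u * c.pair β v

lemma two_mul_corootForm_cor {γ : Fin n → ℤ} (hγ : γ ∈ c.R) (v : Fin n → ℤ) :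
    2 * c.corootForm v (c.cor γ) = c.pair γ v * c.corootForm (c.cor γ) (c.cor γ) := by
  have h := c.corootForm_coreflection hγ v (c.cor γ)
  rw [c.coreflection_cor hγ, coreflection, map_neg, map_sub, map_smul, LinearMap.sub_apply,
    LinearMap.smul_apply, smul_eq_mul] at h
  linarith

lemma pairTwoRho_cor_lt_corootForm {γ : Fin n → ℤ} (hγ : γ ∈ c.R) :
    c.pairTwoRho (c.cor γ) < c.corootForm (c.cor γ) (c.cor γ) := by
  rw [corootForm_apply, pairTwoRho]
  refine Finset.sum_lt_sum (fun β _ => ?_) ⟨γ, hγ, ?_⟩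
  · split_ifs
    · simpa only [sq] using Int.le_self_sq (c.pair β (c.cor γ))
    · exact mul_self_nonneg _
  · rw [c.pair_cor_self hγ]
    split_ifs <;> norm_num

lemma corootForm_cor_pos {γ : Fin n → ℤ} (hγ : γ ∈ c.R) :
    0 < c.corootForm (c.cor γ) (c.cor γ) := by
  rw [corootForm_apply]
  refine Finset.sum_pos' (fun β _ => mul_self_nonneg _) ⟨γ, hγ, ?_⟩
  rw [c.pair_cor_self hγ]
  norm_num

lemma two_mul_corootForm_single (i : Fin n) (v : Fin n → ℤ) :
    2 * c.corootForm v (Pi.single i 1) =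
      c.pair (Pi.single i 1) v * c.corootForm (Pi.single i 1) (Pi.single i 1) := by
  simpa only [c.cor_simple] using c.two_mul_corootForm_cor (c.simple_mem i) v

lemma corootForm_single_pos (i : Fin n) : 0 < c.corootForm (Pi.single i 1) (Pi.single i 1) := by
  simpa only [c.cor_simple] using c.corootForm_cor_pos (c.simple_mem i)

lemma eq_zero_of_forall_corootForm_single_eq_zero {v : Fin n → ℤ}
    (hv : ∀ i, c.corootForm v (Pi.single i 1) = 0) : v = 0 := by
  refine c.eq_zero_of_forall_mul_pair_single_nonpos fun i => ?_
  have h := c.two_mul_corootForm_single i v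
  rw [hv, mul_zero, zero_eq_mul, or_iff_left (c.corootForm_single_pos i).ne'] at h
  rw [h, mul_zero]

/-- The identity `γ^∨ / (γ^∨, γ^∨) = ∑ j, γ_j α_j^∨ / (α_j^∨, α_j^∨)`, read in coordinates. -/
lemma corootForm_single_mul_cor_apply {γ : Fin n → ℤ} (hγ : γ ∈ c.R) (j : Fin n) :
    c.corootForm (Pi.single j 1) (Pi.single j 1) * c.cor γ j =
      c.corootForm (c.cor γ) (c.cor γ) * γ j := by
  let d : Fin n → ℤ := fun k => c.corootForm (Pi.single k 1) (Pi.single k 1)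
  let e : Fin n → ℤ := fun k => ∏ l ∈ Finset.univ.erase k, d l
  have he (k) : 0 < e k := Finset.prod_pos fun l _ => c.corootForm_single_pos l
  have hed (k) : e k * d k = ∏ l, d l := Finset.prod_erase_mul _ _ (Finset.mem_univ k)
  have hscaled (i) : 2 * c.corootForm (e * γ) (Pi.single i 1) =
      (∏ l, d l) * c.pair γ (Pi.single i 1) := by
    rw [corootForm_comm, pi_eq_sum_univ' (e * γ), map_sum, pair_eq_sum_left, Finset.mul_sum,
      Finset.mul_sum]
    refine Finset.sum_congr rfl fun k _ => ?_
    rw [← hed k, map_smul, smul_eq_mul, Pi.mul_apply]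
    linear_combination e k * γ k * c.two_mul_corootForm_single k (Pi.single i 1)
  have hzero : (∏ l, d l) • c.cor γ - c.corootForm (c.cor γ) (c.cor γ) • (e * γ) = 0 := by
    refine c.eq_zero_of_forall_corootForm_single_eq_zero fun i => ?_
    have h := c.two_mul_corootForm_cor hγ (Pi.single i 1)
    rw [corootForm_comm] at h
    simp only [map_sub, map_smul, LinearMap.sub_apply, LinearMap.smul_apply, smul_eq_mul]
    linarith [congrArg ((∏ l, d l) * ·) h,
      congrArg (c.corootForm (c.cor γ) (c.cor γ) * ·) (hscaled i)]
  have hj : (∏ l, d l) * c.cor γ j - c.corootForm (c.cor γ) (c.cor γ) * (e j * γ j) = 0 :=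
    congrFun hzero j
  refine mul_left_cancel₀ (he j).ne' ?_
  linear_combination hj + c.cor γ j * hed j

lemma suppIn_cor {P : Finset (Fin n)} {γ : Fin n → ℤ} (hγ : γ ∈ c.R) (hP : suppIn P γ) :
    suppIn P (c.cor γ) := fun j hj => by
  have h := c.corootForm_single_mul_cor_apply hγ j
  rw [hP j hj, mul_zero, mul_eq_zero] at h
  exact h.resolve_left (c.corootForm_single_pos j).ne'

lemma cor_nonneg {γ : Fin n → ℤ} (hγ : γ ∈ c.posRoots) (j : Fin n) : 0 ≤ c.cor γ j := by
  obtain ⟨hR, hnonneg⟩ := c.mem_posRoots.mp hγ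
  refine nonneg_of_mul_nonneg_right ?_ (c.corootForm_single_pos j)
  rw [c.corootForm_single_mul_cor_apply hR j]
  exact mul_nonneg (c.corootForm_cor_pos hR).le (hnonneg j)

lemma pairTwoRho_cor_pos {γ : Fin n → ℤ} (hγ : γ ∈ c.posRoots) : 0 < c.pairTwoRho (c.cor γ) := by
  have hcor : c.cor γ ≠ 0 := fun h =>
    (c.corootForm_cor_pos (c.mem_posRoots.mp hγ).1).ne' (by simp [h])
  obtain ⟨j, hj⟩ := Function.ne_iff.mp hcor
  rw [pairTwoRho_eq_two_mul_sum]
  exact mul_pos two_pos (Finset.sum_pos' (fun k _ => c.cor_nonneg hγ k)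
    ⟨j, Finset.mem_univ j, (c.cor_nonneg hγ j).lt_of_ne' hj⟩)

/-! ### Existence -/

/-- The function minimised by the lift: `|v + r|² - |r|²` for the canonical form, where `r` is the
vector with `(r, ·) = ⟨ρ, ·⟩`. The constant makes it integral on the coroot lattice. -/
def liftEnergy (v : Fin n → ℤ) : ℤ := c.corootForm v v + c.pairTwoRho v

lemma liftEnergy_nonneg (v : Fin n → ℤ) : 0 ≤ c.liftEnergy v := by
  rw [liftEnergy, corootForm_apply, pairTwoRho, ← Finset.sum_add_distrib]
  refine Finset.sum_nonneg fun β _ => ?_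
  have h := Int.le_self_sq (-c.pair β v)
  split_ifs <;> nlinarith

lemma liftEnergy_add_cor {γ : Fin n → ℤ} (hγ : γ ∈ c.R) (v : Fin n → ℤ) :
    c.liftEnergy (v + c.cor γ) = c.liftEnergy v +
      ((c.pair γ v + 1) * c.corootForm (c.cor γ) (c.cor γ) + c.pairTwoRho (c.cor γ)) := by
  have h := c.two_mul_corootForm_cor hγ v
  simp only [liftEnergy, pairTwoRho_eq_two_mul_sum, map_add, LinearMap.add_apply, Pi.add_apply,
    Finset.sum_add_distrib, c.corootForm_comm (c.cor γ) v]
  linear_combination h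

lemma pair_eq_zero_or_neg_one_of_liftEnergy_le {γ : Fin n → ℤ} (hγ : γ ∈ c.posRoots) {v : Fin n → ℤ}
    (hadd : c.liftEnergy v ≤ c.liftEnergy (v + c.cor γ))
    (hsub : c.liftEnergy v ≤ c.liftEnergy (v + c.cor (-γ))) :
    c.pair γ v = 0 ∨ c.pair γ v = -1 := by
  have hR := (c.mem_posRoots.mp hγ).1
  have hlt := c.pairTwoRho_cor_lt_corootForm hR
  have hpos := c.pairTwoRho_cor_pos hγ
  rw [c.liftEnergy_add_cor hR] at hadd
  rw [c.liftEnergy_add_cor (c.neg_mem γ hR), c.cor_neg γ hR, pair_neg_left, pairTwoRho_neg,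
    map_neg, map_neg, LinearMap.neg_apply, neg_neg] at hsub
  have hlow : 0 < (c.pair γ v + 2) * c.corootForm (c.cor γ) (c.cor γ) := by linarith
  have hup : 0 < (1 - c.pair γ v) * c.corootForm (c.cor γ) (c.cor γ) := by linarith
  rw [mul_pos_iff_of_pos_right (c.corootForm_cor_pos hR)] at hlow hup
  omega

lemma exists_isMinOn_liftEnergy {S : Set (Fin n → ℤ)} (hS : S.Nonempty) :
    ∃ v ∈ S, IsMinOn c.liftEnergy S v := by
  obtain ⟨v, hv⟩ := hS
  obtain ⟨_, ⟨μ, hμ, rfl⟩, hmin⟩ := Int.exists_least_of_bdd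
    (P := (· ∈ c.liftEnergy '' S)) ⟨0, fun _ ⟨u, _, hu⟩ => hu ▸ c.liftEnergy_nonneg u⟩
    ⟨_, v, hv, rfl⟩
  exact ⟨μ, hμ, fun u hu => hmin _ ⟨u, hu, rfl⟩⟩

lemma exists_lift (P : Finset (Fin n)) (lam : Fin n → ℤ) :
    ∃ μ : Fin n → ℤ, (∀ i, i ∉ P → lam i = μ i) ∧
      ∀ γ ∈ c.R, (∀ i, 0 ≤ γ i) → suppIn P γ → c.pair γ μ = 0 ∨ c.pair γ μ = -1 := by
  obtain ⟨μ, hμ, hmin⟩ := c.exists_isMinOn_liftEnergy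
    (S := {v | ∀ i, i ∉ P → lam i = v i}) ⟨lam, fun _ _ => rfl⟩
  have hle {γ} (hγ : γ ∈ c.R) (hP : suppIn P γ) :
      c.liftEnergy μ ≤ c.liftEnergy (μ + c.cor γ) :=
    hmin fun i hi => by rw [Pi.add_apply, c.suppIn_cor hγ hP i hi, add_zero, hμ i hi]
  exact ⟨μ, hμ, fun γ hγ hnonneg hP => c.pair_eq_zero_or_neg_one_of_liftEnergy_le
    (c.mem_posRoots.mpr ⟨hγ, hnonneg⟩) (hle hγ hP)
    (hle (c.neg_mem γ hγ) fun i hi => by rw [Pi.neg_apply, hP i hi, neg_zero])⟩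

/-! ### Uniqueness -/

lemma abs_pair_coreflection_single_le_one {P : Finset (Fin n)} {i : Fin n} (hi : i ∈ P)
    {v : Fin n → ℤ} (hv : ∀ γ ∈ c.R, suppIn P γ → |c.pair γ v| ≤ 1) {γ : Fin n → ℤ}
    (hγ : γ ∈ c.R) (hP : suppIn P γ) : |c.pair γ (c.coreflection (Pi.single i 1) v)| ≤ 1 := by
  rw [← c.pair_act_σ (c.simple_mem i)]
  refine hv _ (c.act_mem _ _ hγ) fun j hj => ?_
  rw [c.act_σ (c.simple_mem i)]
  simp [hP j hj, suppIn_single hi j hj]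

lemma eq_zero_of_coreflection_single_eq_zero {i : Fin n} {v : Fin n → ℤ}
    (h : c.coreflection (Pi.single i 1) v = 0) : v = 0 := by
  rw [coreflection_single, sub_eq_zero] at h
  have hpair := congrArg (c.pair (Pi.single i 1)) h
  rw [pair_smul_right, pair_single_self] at hpair
  rw [h, show c.pair (Pi.single i 1) v = 0 by omega, zero_smul]

lemma eq_zero_of_abs_pair_le_one {P : Finset (Fin n)} {v : Fin n → ℤ} (hsupp : suppIn P v)
    (hv : ∀ γ ∈ c.R, suppIn P γ → |c.pair γ v| ≤ 1) : v = 0 := by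
  induction hN : ∑ j, (v j).natAbs using Nat.strong_induction_on generalizing v with
  | _ N ih =>
    by_contra hne
    obtain ⟨i, hi⟩ : ∃ i, 0 < v i * c.pair (Pi.single i 1) v := by
      by_contra! h
      exact hne (c.eq_zero_of_forall_mul_pair_single_nonpos h)
    have hiP : i ∈ P := by
      by_contra h
      simp [hsupp i h] at hi
    have hsingle := suppIn_single hiP
    refine hne (c.eq_zero_of_coreflection_single_eq_zero (i := i) (ih _ ?_ (fun j hj => ?_)
      (fun γ => c.abs_pair_coreflection_single_le_one hiP hv) rfl))
    · rw [← hN, coreflection_single]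
      exact sum_natAbs_sub_single_lt (hv _ (c.simple_mem i) hsingle) hi
    · simp [coreflection_single, hsupp j hj, hsingle j hj]

lemma abs_pair_le_one_of_nonneg {P : Finset (Fin n)} {v : Fin n → ℤ}
    (hv : ∀ γ ∈ c.R, (∀ i, 0 ≤ γ i) → suppIn P γ → |c.pair γ v| ≤ 1) :
    ∀ γ ∈ c.R, suppIn P γ → |c.pair γ v| ≤ 1 := by
  intro γ hγ hP
  rcases c.pos_or_neg γ hγ with h | h
  · exact hv γ hγ h hP
  · rw [← abs_neg, ← pair_neg_left]
    exact hv (-γ) (c.neg_mem γ hγ) (fun i => neg_nonneg.mpr (h i))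
      fun i hi => by rw [Pi.neg_apply, hP i hi, neg_zero]

end RootSystemData

/-- **Peterson–Woodward lifting.**  For every coset `λ_P ∈ Q^∨/Q_P^∨` (represented by
`lam ∈ Q^∨`) there is a unique `λ_B ∈ Q^∨` such that `λ_P = λ_B + Q_P^∨` and
`⟨α, λ_B⟩ ∈ {0, -1}` for all `α ∈ R_P^+`. -/
theorem peterson_woodward_lifting {n : ℕ} (c : RootSystemData n)
    (P : Finset (Fin n)) (lam : Fin n → ℤ) :
    ∃! lamB : Fin n → ℤ,
      (∀ i, i ∉ P → lam i = lamB i) ∧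
      ∀ γ ∈ c.R, (∀ i, 0 ≤ γ i) → suppIn P γ →
        c.pair γ lamB = 0 ∨ c.pair γ lamB = -1 := by
  obtain ⟨μ, hμ, hμ'⟩ := c.exists_lift P lam
  refine ⟨μ, ⟨hμ, hμ'⟩, fun ν ⟨hν, hν'⟩ => sub_eq_zero.mp ?_⟩
  have hsupp : suppIn P (ν - μ) := fun i hi => by rw [Pi.sub_apply, ← hν i hi, ← hμ i hi, sub_self]
  refine c.eq_zero_of_abs_pair_le_one hsupp (c.abs_pair_le_one_of_nonneg fun γ hγ hnonneg hP => ?_)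
  rw [c.pair_sub_right, abs_le]
  have hμγ := hμ' γ hγ hnonneg hP
  have hνγ := hν' γ hγ hnonneg hP
  omega
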